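/- Lemma 2 (Non-interference with declassifications coincides with dependency-based non-interference with declassifications): A program p is non-interfering with respect to (L, ⊑, DE, lvl) if and only if for every program variable x, setting DP = ⋃_{l' ⊑ lvl(x)} DE(l'), the set {y ∈ PV | lvl(y) ⊑ lvl(x)} is a dependency set for the term x under p relative to DP. -/

import Mathlib

/-- Program variables: a fixed countable set. -/
abbrev PV := ℕ

/-- A state assigns an integer to every program variable. -/
abbrev State := PV → ℤ

mutual
/-- Terms of the imperative language. -/
inductive Term : Type
  | lit : ℤ → Term
  | var : PV → Term
  | add : Term → Term → Term
  | sub : Term → Term → Term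
  | mul : Term → Term → Term
  | div : Term → Term → Term
  | mod : Term → Term → Term
  | ite : Formula → Term → Term → Term

/-- Boolean formulas of the imperative language. -/
inductive Formula : Type
  | tt : Formula
  | ff : Formula
  | eq : Term → Term → Formula
  | lt : Term → Term → Formula
  | le : Term → Term → Formula
  | not : Formula → Formula
  | and : Formula → Formula → Formula
  | or : Formula → Formula → Formula
end

mutual
/-- Standard evaluation of terms. -/
def evalT (s : State) : Term → ℤ
  | .lit n => n
  | .var x => s x
  | .add a b => evalT s a + evalT s b
  | .sub a b => evalT s a - evalT s b
  | .mul a b => evalT s a * evalT s b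
  | .div a b => evalT s a / evalT s b
  | .mod a b => evalT s a % evalT s b
  | .ite φ a b => if evalF s φ then evalT s a else evalT s b

/-- Standard evaluation of formulas. -/
def evalF (s : State) : Formula → Bool
  | .tt => true
  | .ff => false
  | .eq a b => evalT s a == evalT s b
  | .lt a b => decide (evalT s a < evalT s b)
  | .le a b => decide (evalT s a ≤ evalT s b)
  | .not φ => !(evalF s φ)
  | .and φ ψ => evalF s φ && evalF s ψ
  | .or φ ψ => evalF s φ || evalF s ψ
end

/-- Programs of the imperative language. -/
inductive Prog : Type
  | assign : PV → Term → Prog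
  | ite : Formula → Prog → Prog → Prog
  | while : Formula → Prog → Prog
  | seq : Prog → Prog → Prog

/-- Big-step operational semantics: `(p , s) ⇓ s'`. -/
inductive BigStep : Prog → State → State → Prop
  | assign (x : PV) (t : Term) (s : State) :
      BigStep (.assign x t) s (Function.update s x (evalT s t))
  | seq {p q : Prog} {s s' s'' : State} :
      BigStep p s s' → BigStep q s' s'' → BigStep (.seq p q) s s''
  | iteTrue {φ : Formula} {p q : Prog} {s s' : State} :
      evalF s φ = true → BigStep p s s' → BigStep (.ite φ p q) s s'
  | iteFalse {φ : Formula} {p q : Prog} {s s' : State} :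
      evalF s φ = false → BigStep q s s' → BigStep (.ite φ p q) s s'
  | whileFalse {φ : Formula} {p : Prog} {s : State} :
      evalF s φ = false → BigStep (.while φ p) s s
  | whileTrue {φ : Formula} {p : Prog} {s s' s'' : State} :
      evalF s φ = true → BigStep p s s' → BigStep (.while φ p) s' s'' →
      BigStep (.while φ p) s s''

/-- `X` is a dependency set for the term `t` under the program `p`. -/
def DepSet (X : Set PV) (t : Term) (p : Prog) : Prop :=
  ∀ s1 s2 s1' s2' : State, BigStep p s1 s1' → BigStep p s2 s2' →
    (∀ y ∈ X, s1 y = s2 y) → evalT s1' t = evalT s2' t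
attribute [local instance] Classical.propDecidable

/-- A declassification pair: a release condition and a released term or formula. -/
structure DeclPair where
  cond : Formula
  rel : Term ⊕ Formula

/-- `DP`-equivalence of states: they agree on the released information of every
declassification pair whose condition holds in both states. -/
def DPEquiv (DP : Set DeclPair) (s1 s2 : State) : Prop :=
  ∀ dp ∈ DP, evalF s1 dp.cond = true → evalF s2 dp.cond = true →
    match dp.rel with
    | .inl t => evalT s1 t = evalT s2 t
    | .inr φ => evalF s1 φ = evalF s2 φ

/-- `X` is a dependency set for `t` under `p` relative to the declassification pairs `DP`. -/
def DepSetD (DP : Set DeclPair) (X : Set PV) (t : Term) (p : Prog) : Prop :=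
  ∀ s1 s2 s1' s2' : State, BigStep p s1 s1' → BigStep p s2 s2' →
    DPEquiv DP s1 s2 → (∀ y ∈ X, s1 y = s2 y) → evalT s1' t = evalT s2' t

/-- `DP` is guard-closed: `DP`-equivalent states agree on all release conditions. -/
def GuardClosed (DP : Set DeclPair) : Prop :=
  ∀ dp ∈ DP, ∀ s1 s2 : State, DPEquiv DP s1 s2 → evalF s1 dp.cond = evalF s2 dp.cond
/-- `l`-equivalence of states w.r.t. a level assignment `lvl`. -/
def LEquiv {L : Type*} [PartialOrder L] (lvl : PV → L) (l : L) (s1 s2 : State) : Prop :=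
  ∀ x : PV, lvl x ≤ l → s1 x = s2 x

/-- Non-interference w.r.t. a policy `(L, ≤, DE, lvl)` with declassification
environment `DE`. -/
def NonInterferingD {L : Type*} [PartialOrder L] (lvl : PV → L)
    (DE : L → Set DeclPair) (p : Prog) : Prop :=
  ∀ (l : L) (s1 s2 s1' s2' : State), LEquiv lvl l s1 s2 →
    DPEquiv (⋃ l' ∈ {l' : L | l' ≤ l}, DE l') s1 s2 →
    BigStep p s1 s1' → BigStep p s2 s2' → LEquiv lvl l s1' s2'

/-- Lemma 2: non-interference with declassifications coincides with
dependency-based non-interference with declassifications. -/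
theorem noninterference_decl_iff_dependency_based {L : Type*} [PartialOrder L]
    (lvl : PV → L) (DE : L → Set DeclPair) (p : Prog) :
    NonInterferingD lvl DE p ↔
      ∀ x : PV, DepSetD (⋃ l' ∈ {l' : L | l' ≤ lvl x}, DE l')
        {y : PV | lvl y ≤ lvl x} (Term.var x) p := by
  constructor
  · intro h x s1 s2 s1' s2' h1 h2 hDP hX
    simpa only [evalT] using h (lvl x) s1 s2 s1' s2' hX hDP h1 h2 x le_rfl
  · intro h l s1 s2 s1' s2' hl hDP h1 h2 x hx
    -- Lowering the level from `l` to `lvl x` shrinks both the observed variables and the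
    -- released pairs, so both equivalences at `l` imply those at `lvl x`.
    have hDP' : DPEquiv (⋃ l' ∈ {l' : L | l' ≤ lvl x}, DE l') s1 s2 := fun dp hdp =>
      hDP dp (Set.biUnion_subset_biUnion_left (fun _ hl' => le_trans hl' hx) hdp)
    simpa only [evalT] using
      h x s1 s2 s1' s2' h1 h2 hDP' (fun y hy => hl y (le_trans hy hx))
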